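/- Let B be an abelian category and A a full abelian subcategory of B that is closed under short exact sequences and closed under subobjects and quotient objects of its objects, let M be a commutative monoid, and let v be an M-valued volume on A. If f : X → Y and g : Y → Z are morphisms of B that are Fredholm with respect to v, then the composite g∘f is Fredholm with respect to v and Ind(g∘f) = Ind(g)·Ind(f) in M. -/

import Mathlib

open CategoryTheory Limits

universe v u

variable {B : Type u} [Category.{v} B] [Abelian B] {M : Type*} [CommMonoid M]

/-- The index of a morphism whose kernel has invertible volume:
`Ind(f) = v(Cok f) · v(Ker f)⁻¹`. -/
noncomputable def fredholmIndex (v : B → M) {X Y : B} (f : X ⟶ Y)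
    (h : IsUnit (v (kernel f))) : M :=
  v (cokernel f) * ↑h.unit⁻¹

section
variable (P : B → Prop) (v : B → M)

/-- A morphism is Fredholm with respect to the volume `v` (defined on the subcategory of
objects satisfying `P`) if its kernel and cokernel lie in the subcategory and have
invertible volume. -/
def IsFredholm {X Y : B} (f : X ⟶ Y) : Prop :=
  P (kernel f) ∧ IsUnit (v (kernel f)) ∧ P (cokernel f) ∧ IsUnit (v (cokernel f))

/-- A morphism is finite with respect to the volume `v` if its image lies in the
subcategory and has invertible volume. -/
def IsFiniteMor {X Y : B} (f : X ⟶ Y) : Prop :=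
  P (image f) ∧ IsUnit (v (image f))

/-- The closure and volume axioms: `P` cuts out a full abelian subcategory closed under
subobjects, quotient objects and short exact sequences, and `v` is an `M`-valued volume
on it. -/
def VolumeAxioms : Prop :=
  (∀ ⦃X Y : B⦄, (X ≅ Y) → P X → P Y) ∧
  (∀ X : B, IsZero X → P X) ∧
  (∀ ⦃X Y : B⦄ (f : X ⟶ Y), Mono f → P Y → P X) ∧
  (∀ ⦃X Y : B⦄ (f : X ⟶ Y), Epi f → P X → P Y) ∧
  (∀ S : ShortComplex B, S.ShortExact → P S.X₁ → P S.X₃ → P S.X₂) ∧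
  (∀ X : B, IsZero X → v X = 1) ∧
  (∀ S : ShortComplex B, S.ShortExact → P S.X₁ → P S.X₂ → P S.X₃ →
    v S.X₂ = v S.X₁ * v S.X₃)
end

/-!
The objects of `P` with invertible volume form a Serre class `Q`, and a morphism is Fredholm exactly
when it is an isomorphism modulo `Q`; such morphisms are closed under composition. The index formula
is the vanishing of the multiplicative Euler characteristic of the exact sequence
`0 ⟶ ker f ⟶ ker (f ≫ g) ⟶ ker g ⟶ coker f ⟶ coker (f ≫ g) ⟶ coker g ⟶ 0`.
-/

theorem prod_even_fin_succ {n : ℕ} (a : Fin (n + 1) → M) :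
    ∏ i with Even i.val, a i = a 0 * ∏ i : Fin n with Odd i.val, a i.succ := by
  simp [Finset.prod_filter, Fin.prod_univ_succ, Nat.even_add_one]

theorem prod_odd_fin_succ {n : ℕ} (a : Fin (n + 1) → M) :
    ∏ i with Odd i.val, a i = ∏ i : Fin n with Even i.val, a i.succ := by
  simp [Finset.prod_filter, Fin.prod_univ_succ, Nat.odd_add_one]

/-- The objects of the subcategory `P` whose volume is invertible in `M`, as an object property, so
that morphisms with kernel and cokernel of this kind are the `isoModSerre` morphisms. -/
def invertibleVolume (P : B → Prop) (v : B → M) : ObjectProperty B :=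
  fun X ↦ P X ∧ IsUnit (v X)

namespace VolumeAxioms

variable {P : B → Prop} {v : B → M}

theorem isSerreClass (hax : VolumeAxioms P v) : ObjectProperty.IsSerreClass P where
  exists_zero := ⟨_, isZero_zero B, hax.2.1 _ (isZero_zero B)⟩
  prop_of_mono f _ hY := hax.2.2.1 f inferInstance hY
  prop_of_epi f _ hX := hax.2.2.2.1 f inferInstance hX
  prop_X₂_of_shortExact hS h₁ h₃ := hax.2.2.2.2.1 _ hS h₁ h₃

theorem volume_eq_one_of_isZero (hax : VolumeAxioms P v) {X : B} (hX : IsZero X) : v X = 1 :=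
  hax.2.2.2.2.2.1 X hX

theorem volume_eq_mul_of_shortExact (hax : VolumeAxioms P v) {S : ShortComplex B}
    (hS : S.ShortExact) (h₂ : P S.X₂) : v S.X₂ = v S.X₁ * v S.X₃ := by
  have := hax.isSerreClass
  obtain ⟨h₁, h₃⟩ := (ObjectProperty.prop_iff_of_shortExact P hS).1 h₂
  exact hax.2.2.2.2.2.2 S hS h₁ h₂ h₃

theorem invertibleVolume_iff_of_shortExact (hax : VolumeAxioms P v) {S : ShortComplex B}
    (hS : S.ShortExact) :
    invertibleVolume P v S.X₂ ↔ invertibleVolume P v S.X₁ ∧ invertibleVolume P v S.X₃ := by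
  have := hax.isSerreClass
  have hP : P S.X₂ ↔ P S.X₁ ∧ P S.X₃ := ObjectProperty.prop_iff_of_shortExact P hS
  have hv (h₂ : P S.X₂) : IsUnit (v S.X₂) ↔ IsUnit (v S.X₁) ∧ IsUnit (v S.X₃) := by
    rw [hax.volume_eq_mul_of_shortExact hS h₂, IsUnit.mul_iff]
  simp only [invertibleVolume]
  tauto

theorem isSerreClass_invertibleVolume (hax : VolumeAxioms P v) :
    (invertibleVolume P v).IsSerreClass where
  exists_zero :=
    ⟨_, isZero_zero B, hax.2.1 _ (isZero_zero B),
      hax.volume_eq_one_of_isZero (isZero_zero B) ▸ isUnit_one⟩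
  prop_of_mono f _ hY :=
    ((hax.invertibleVolume_iff_of_shortExact
      (S := .mk f (cokernel.π f) (cokernel.condition f))
      { exact := ShortComplex.exact_cokernel f }).1 hY).1
  prop_of_epi f _ hX :=
    ((hax.invertibleVolume_iff_of_shortExact
      (S := .mk (kernel.ι f) f (kernel.condition f))
      { exact := ShortComplex.exact_kernel f }).1 hX).2
  prop_X₂_of_shortExact hS h₁ h₃ := (hax.invertibleVolume_iff_of_shortExact hS).2 ⟨h₁, h₃⟩

theorem volume_eq_kernel_mul_of_epi_mono_fac (hax : VolumeAxioms P v) {X I Y : B}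
    {f : X ⟶ Y} {e : X ⟶ I} {m : I ⟶ Y} [Epi e] [Mono m] (fac : e ≫ m = f) (hX : P X) :
    v X = v (kernel f) * v I := by
  have zero : kernel.ι f ≫ e = 0 := by simp [← cancel_mono m, fac]
  have hS : (ShortComplex.mk (kernel.ι f) e zero).ShortExact :=
    { exact := ShortComplex.exact_of_f_is_kernel _
        (isKernelOfComp _ _ (kernelIsKernel f) zero fac) }
  exact hax.volume_eq_mul_of_shortExact hS hX

theorem volume_eq_kernel_mul_kernel_of_exact (hax : VolumeAxioms P v) {S : ShortComplex B}
    (hS : S.Exact) (h₁ : P S.X₁) : v S.X₁ = v (kernel S.f) * v (kernel S.g) := by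
  have : Epi (kernel.lift S.g S.f S.zero) := hS.epi_kernelLift
  exact hax.volume_eq_kernel_mul_of_epi_mono_fac (kernel.lift_ι S.g S.f S.zero) h₁

theorem prod_even_volume_eq_kernel_mul_prod_odd_volume (hax : VolumeAxioms P v) {n : ℕ}
    {S : ComposableArrows B (n + 1)} (hS : S.Exact) (hlast : Epi (S.map' n (n + 1)))
    (hP : ∀ i, P (S.obj i)) :
    ∏ i with Even i.val, v (S.obj i) =
      v (kernel (S.map' 0 1)) * ∏ i with Odd i.val, v (S.obj i) := by
  induction n with
  | zero =>
    have hhead : v (S.obj 0) = v (kernel (S.map' 0 1)) * v (S.obj 1) :=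
      hax.volume_eq_kernel_mul_of_epi_mono_fac (m := 𝟙 (S.obj 1))
        (Category.comp_id _) (hP 0)
    simpa [Finset.prod_filter, Fin.prod_univ_two] using hhead
  | succ n ih =>
    have hhead : v (S.obj 0) = v (kernel (S.map' 0 1)) * v (kernel (S.map' 1 2)) :=
      hax.volume_eq_kernel_mul_kernel_of_exact (hS.exact 0) (hP 0)
    have htail : ∏ i : Fin (n + 2) with Even i.val, v (S.obj i.succ) =
        v (kernel (S.map' 1 2)) * ∏ i : Fin (n + 2) with Odd i.val, v (S.obj i.succ) :=
      ih hS.δ₀ hlast fun i ↦ hP i.succ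
    rw [prod_even_fin_succ (n := n + 2), prod_odd_fin_succ (n := n + 2), htail, hhead, mul_assoc]

theorem prod_even_volume_eq_prod_odd_volume (hax : VolumeAxioms P v) {n : ℕ}
    {S : ComposableArrows B (n + 1)} (hS : S.Exact) (hfirst : Mono (S.map' 0 1))
    (hlast : Epi (S.map' n (n + 1))) (hP : ∀ i, P (S.obj i)) :
    ∏ i with Even i.val, v (S.obj i) = ∏ i with Odd i.val, v (S.obj i) := by
  rw [hax.prod_even_volume_eq_kernel_mul_prod_odd_volume hS hlast hP,
    hax.volume_eq_one_of_isZero (isZero_kernel_of_mono _), one_mul]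

theorem volume_kernel_mul_kernel_mul_cokernel_comp (hax : VolumeAxioms P v)
    {X Y Z : B} {f : X ⟶ Y} {g : Y ⟶ Z}
    (hkf : P (kernel f)) (hkg : P (kernel g)) (hcf : P (cokernel f)) (hcg : P (cokernel g)) :
    v (kernel f) * v (kernel g) * v (cokernel (f ≫ g)) =
      v (kernel (f ≫ g)) * v (cokernel f) * v (cokernel g) := by
  let K := kernelCokernelCompSequence f g
  have := hax.isSerreClass
  have hK : K.Exact := kernelCokernelCompSequence_exact f g
  have hP : ∀ i, P (K.obj i)
    | 0 => hkf
    | 1 => ObjectProperty.prop_X₂_of_exact P (hK.exact 0) hkf hkg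
    | 2 => hkg
    | 3 => hcf
    | 4 => ObjectProperty.prop_X₂_of_exact P (hK.exact 3) hcf hcg
    | 5 => hcg
  have hfirst : Mono (K.map' 0 1) := inferInstance
  have hlast : Epi (K.map' 4 5) := inferInstance
  have heuler : v (K.obj 0) * v (K.obj 2) * v (K.obj 4) =
      v (K.obj 1) * v (K.obj 3) * v (K.obj 5) := by
    simpa [Finset.prod_filter, Fin.prod_univ_six, Nat.even_iff, Nat.odd_iff] using
      hax.prod_even_volume_eq_prod_odd_volume hK hfirst hlast hP
  exact heuler

end VolumeAxioms

theorem isFredholm_iff_isoModSerre {P : B → Prop} {v : B → M} [(invertibleVolume P v).IsSerreClass]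
    {X Y : B} {f : X ⟶ Y} : IsFredholm P v f ↔ (invertibleVolume P v).isoModSerre f :=
  and_assoc.symm

theorem IsFredholm.comp {P : B → Prop} {v : B → M} (hax : VolumeAxioms P v) {X Y Z : B}
    {f : X ⟶ Y} {g : Y ⟶ Z} (hf : IsFredholm P v f) (hg : IsFredholm P v g) :
    IsFredholm P v (f ≫ g) := by
  have := hax.isSerreClass_invertibleVolume
  rw [isFredholm_iff_isoModSerre] at hf hg ⊢
  exact MorphismProperty.comp_mem _ f g hf hg

theorem fredholmIndex_eq_iff {v : B → M} {X Y : B} {f : X ⟶ Y} (h : IsUnit (v (kernel f))) {m : M} :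
    fredholmIndex v f h = m ↔ v (cokernel f) = m * v (kernel f) := by
  rw [fredholmIndex, Units.mul_inv_eq_iff_eq_mul, IsUnit.unit_spec]

/-- Fredholm morphisms (with respect to a volume on an abelian
subcategory closed under short exact sequences, subobjects and quotients) are closed
under composition, and the index is multiplicative: `Ind(g∘f) = Ind(g)·Ind(f)`. -/
theorem fredholm_comp
    (P : B → Prop) (v : B → M) (hax : VolumeAxioms P v)
    {X Y Z : B} (f : X ⟶ Y) (g : Y ⟶ Z)
    (hf : IsFredholm P v f) (hg : IsFredholm P v g) :
    ∃ hfg : IsFredholm P v (f ≫ g),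
      fredholmIndex v (f ≫ g) hfg.2.1 =
        fredholmIndex v g hg.2.1 * fredholmIndex v f hf.2.1 := by
  have hfg := hf.comp hax hg
  refine ⟨hfg, (fredholmIndex_eq_iff hfg.2.1).2 ?_⟩
  have hf_index : v (cokernel f) = fredholmIndex v f hf.2.1 * v (kernel f) :=
    (fredholmIndex_eq_iff hf.2.1).1 rfl
  have hg_index : v (cokernel g) = fredholmIndex v g hg.2.1 * v (kernel g) :=
    (fredholmIndex_eq_iff hg.2.1).1 rfl
  have hvol := hax.volume_kernel_mul_kernel_mul_cokernel_comp hf.1 hg.1 hf.2.2.1 hg.2.2.1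
  rw [hf_index, hg_index] at hvol
  apply (hf.2.1.mul hg.2.1).mul_left_cancel
  rw [hvol]
  ac_rfl
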